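/- Let s > 0 and set X := √(b_{s,5}·b_{4s,5}) and Y := √(b_{s,5}/b_{4s,5}). Then (Y^4 + 1/Y^4) - 3(Y^2 + 1/Y^2) - 5(X + 1/X)(Y + 1/Y) - 12 = 0. -/

import Mathlib

open Real

/-- Ramanujan's theta function `φ(q) = ∑_{n=-∞}^∞ q^(n^2)`. -/
noncomputable def phi (q : ℝ) : ℝ := ∑' n : ℤ, q ^ (n ^ 2)

/-- Ramanujan's theta function `ψ(q) = ∑_{n=0}^∞ q^(n(n+1)/2)`. -/
noncomputable def psi (q : ℝ) : ℝ := ∑' n : ℕ, q ^ (n * (n + 1) / 2)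

/-- `fneg q` is Ramanujan's `f(-q) = ∑_{n=-∞}^∞ (-1)^n q^(n(3n-1)/2)`. -/
noncomputable def fneg (q : ℝ) : ℝ := ∑' n : ℤ, (-1 : ℝ) ^ n * q ^ (n * (3 * n - 1) / 2)

/-- The remarkable product of theta-functions `b_{s,t}`. -/
noncomputable def b (s t : ℝ) : ℝ :=
  t * Real.exp (-((t - 1) * (π / 4) * Real.sqrt (s / t))) *
      psi (-Real.exp (-(π * Real.sqrt (s * t)))) ^ 2 *
      phi (-Real.exp (-(2 * π * Real.sqrt (s * t)))) ^ 2 /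
    (psi (-Real.exp (-(π * Real.sqrt (s / t)))) ^ 2 *
      phi (-Real.exp (-(2 * π * Real.sqrt (s / t)))) ^ 2)

/-!
The form `m² + n²` is the norm form of `ℤ[i]`. Splitting `ℤ[i]` into the five classes modulo the
prime `2 + i`, multiplication by which scales norms by `5`, relates `θ(v², q) θ(v, q)` for `v⁵ = 1`
to theta series at `q⁵`, where `θ(z, q) = ∑ q^(n²) z^n`. Taking `v = 1` and `v` a primitive root,
and evaluating the theta series by the Jacobi triple product, gives the quintic relation

  `5 - p² = t r (p² - 1)`,  `p = φ(q)/φ(q⁵)`,  `r = φ(-q)/φ(-q⁵)`,  `t = ψ(q²)/(q ψ(q¹⁰))`.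

Replacing `q` by `-q` exchanges `p` and `r` and negates `t`. The two relations together give
`p (t + r) = 5 + t r` and `p (t r + 1) = t + r`. For `q = e^{-π√(s/5)}` one has
`b_{s,5} = 5/(p t r²)` and `b_{4s,5} = 5/(p t² r)`, and the claim is an algebraic consequence.
-/

open Filter Topology Finset

section qPochhammer

variable {𝕜 : Type*} [NormedField 𝕜]

/-- The infinite `q`-Pochhammer symbol `(a; q)_∞ = ∏_{k ≥ 0} (1 - a q^k)`, the building block of
the product formulas for theta functions. -/
noncomputable def qPochhammer (a q : 𝕜) : 𝕜 := ∏' k : ℕ, (1 - a * q ^ k)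

theorem norm_pow_lt_one {q : 𝕜} (hq : ‖q‖ < 1) {n : ℕ} (hn : n ≠ 0) : ‖q ^ n‖ < 1 := by
  rw [norm_pow]
  exact pow_lt_one₀ (norm_nonneg _) hq hn

theorem summable_norm_neg_mul_pow (a : 𝕜) {q : 𝕜} (hq : ‖q‖ < 1) :
    Summable fun k : ℕ => ‖-(a * q ^ k)‖ := by
  simpa only [norm_neg, norm_mul, norm_pow] using
    (summable_geometric_of_lt_one (norm_nonneg q) hq).mul_left ‖a‖

theorem one_sub_mul_pow_ne_zero {a q : 𝕜} (ha : ‖a‖ < 1) (hq : ‖q‖ < 1) (k : ℕ) :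
    1 - a * q ^ k ≠ 0 := by
  refine sub_ne_zero.2 fun h => ?_
  have : ‖a * q ^ k‖ < 1 := by
    rw [norm_mul, norm_pow]
    exact mul_lt_one_of_nonneg_of_lt_one_left (norm_nonneg _) ha
      (pow_le_one₀ (norm_nonneg _) hq.le)
  simp [← h] at this

variable [CompleteSpace 𝕜] {q : 𝕜}

theorem multipliable_one_sub_mul_pow (a : 𝕜) (hq : ‖q‖ < 1) :
    Multipliable fun k : ℕ => 1 - a * q ^ k := by
  simpa only [sub_eq_add_neg] using
    multipliable_one_add_of_summable (summable_norm_neg_mul_pow a hq)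

theorem tendsto_prod_qPochhammer (a : 𝕜) (hq : ‖q‖ < 1) :
    Tendsto (fun n => ∏ k ∈ range n, (1 - a * q ^ k)) atTop (𝓝 (qPochhammer a q)) :=
  (multipliable_one_sub_mul_pow a hq).hasProd.tendsto_prod_nat

theorem qPochhammer_ne_zero {a : 𝕜} (ha : ‖a‖ < 1) (hq : ‖q‖ < 1) : qPochhammer a q ≠ 0 := by
  simp only [qPochhammer, sub_eq_add_neg]
  refine tprod_one_add_ne_zero_of_summable (fun k => ?_) (summable_norm_neg_mul_pow a hq)
  simpa only [sub_eq_add_neg] using one_sub_mul_pow_ne_zero ha hq k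

theorem qPochhammer_pos {a q : ℝ} (ha : |a| < 1) (hq : |q| < 1) : 0 < qPochhammer a q := by
  refine (ge_of_tendsto' (tendsto_prod_qPochhammer a hq) fun n =>
    prod_nonneg fun k _ => ?_).lt_of_ne' (qPochhammer_ne_zero ha hq)
  have : |a * q ^ k| ≤ 1 := by
    rw [abs_mul, abs_pow]
    exact mul_le_one₀ ha.le (by positivity) (pow_le_one₀ (abs_nonneg q) hq.le)
  linarith [le_abs_self (a * q ^ k)]

theorem qPochhammer_eq_prod_residues (a : 𝕜) (hq : ‖q‖ < 1) {m : ℕ} (hm : 0 < m) :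
    qPochhammer a q = ∏ i ∈ range m, qPochhammer (a * q ^ i) (q ^ m) := by
  refine tendsto_nhds_unique ((tendsto_prod_qPochhammer a hq).comp
    (tendsto_id.const_mul_atTop' hm)) ((tendsto_finsetProd (range m) fun i _ =>
      tendsto_prod_qPochhammer (a * q ^ i) (norm_pow_lt_one hq hm.ne')).congr fun N => ?_)
  simp only [Function.comp_apply, id]
  induction N with
  | zero => simp
  | succ N ih =>
    rw [Nat.mul_succ, prod_range_add, ← ih, ← prod_mul_distrib]
    refine prod_congr rfl fun i _ => ?_
    rw [prod_range_succ]
    ring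

theorem qPochhammer_eq_even_mul_odd (a : 𝕜) (hq : ‖q‖ < 1) :
    qPochhammer a q = qPochhammer a (q ^ 2) * qPochhammer (a * q) (q ^ 2) := by
  rw [qPochhammer_eq_prod_residues a hq (m := 2) two_pos, prod_range_succ, prod_range_one,
    pow_zero, mul_one, pow_one]

theorem qPochhammer_mul_neg (a : 𝕜) (hq : ‖q‖ < 1) :
    qPochhammer a q * qPochhammer (-a) q = qPochhammer (a ^ 2) (q ^ 2) := by
  rw [qPochhammer, qPochhammer, ← (multipliable_one_sub_mul_pow a hq).tprod_mul
    (multipliable_one_sub_mul_pow (-a) hq), qPochhammer]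
  refine tprod_congr fun k => ?_
  ring

theorem prod_one_sub_pow_mul_of_isPrimitiveRoot {R : Type*} [CommRing R] [IsDomain R] {n : ℕ}
    {ζ : R} (hζ : IsPrimitiveRoot ζ n) (hn : 0 < n) (x : R) :
    ∏ i ∈ range n, (1 - ζ ^ i * x) = 1 - x ^ n := by
  simpa [Polynomial.eval_prod] using
    (congrArg (Polynomial.eval 1) (X_pow_sub_C_eq_prod hζ hn (rfl : x ^ n = x ^ n))).symm

theorem qPochhammer_prod_roots_of_unity {n : ℕ} {ζ : 𝕜} (hζ : IsPrimitiveRoot ζ n) (hn : 0 < n)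
    (a : 𝕜) (hq : ‖q‖ < 1) :
    ∏ i ∈ range n, qPochhammer (ζ ^ i * a) q = qPochhammer (a ^ n) (q ^ n) := by
  simp only [qPochhammer]
  rw [← Multipliable.tprod_finsetProd fun i _ => multipliable_one_sub_mul_pow (ζ ^ i * a) hq]
  refine tprod_congr fun k => ?_
  simp only [mul_assoc, prod_one_sub_pow_mul_of_isPrimitiveRoot hζ hn, mul_pow,
    pow_right_comm q k n]

end qPochhammer

section FiniteTripleProduct

variable {K : Type*} [Field K] {𝕜 : Type*} [NormedField 𝕜]

/-- The reciprocal of `(q; q)_n = ∏_{k=1}^n (1 - q^k)`, extended by zero to `n < 0` (as `1/Γ` is),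
so that the recursion `qFactorialInv_sub_one` holds on all of `ℤ`. -/
noncomputable def qFactorialInv (q : K) : ℤ → K
  | Int.ofNat n => (∏ k ∈ range n, (1 - q * q ^ k))⁻¹
  | Int.negSucc _ => 0

theorem qFactorialInv_natCast (q : K) (n : ℕ) :
    qFactorialInv q n = (∏ k ∈ range n, (1 - q * q ^ k))⁻¹ := rfl

theorem qFactorialInv_of_neg (q : K) {k : ℤ} (hk : k < 0) : qFactorialInv q k = 0 := by
  obtain ⟨n, rfl⟩ := Int.eq_negSucc_of_lt_zero hk
  rfl

theorem qFactorialInv_sub_one {q : 𝕜} (hq : ‖q‖ < 1) (k : ℤ) :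
    qFactorialInv q (k - 1) = (1 - q ^ k) * qFactorialInv q k := by
  rcases lt_trichotomy k 0 with hk | rfl | hk
  · rw [qFactorialInv_of_neg q hk, qFactorialInv_of_neg q (by lia), mul_zero]
  · rw [qFactorialInv_of_neg q (by lia), zpow_zero, sub_self, zero_mul]
  · obtain ⟨n, rfl⟩ : ∃ n : ℕ, k = n + 1 := ⟨(k - 1).toNat, by lia⟩
    have hne := one_sub_mul_pow_ne_zero hq hq n
    rw [add_sub_cancel_right, ← Nat.cast_succ, qFactorialInv_natCast, qFactorialInv_natCast,
      zpow_natCast, prod_range_succ, mul_inv, pow_succ']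
    field_simp

/-- The Gaussian binomial coefficient `[2n choose n+k]_q`, which vanishes for `|k| > n`. -/
noncomputable def centralGaussBinom (q : K) (n : ℕ) (k : ℤ) : K :=
  (∏ i ∈ range (2 * n), (1 - q * q ^ i)) * (qFactorialInv q (n - k) * qFactorialInv q (n + k))

theorem centralGaussBinom_zero (q : K) (k : ℤ) :
    centralGaussBinom q 0 k = if k = 0 then 1 else 0 := by
  rcases lt_trichotomy k 0 with hk | rfl | hk
  · simp [centralGaussBinom, hk.ne, qFactorialInv_of_neg q hk]
  · simp [centralGaussBinom, qFactorialInv]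
  · simp [centralGaussBinom, hk.ne', qFactorialInv_of_neg q (neg_lt_zero.2 hk)]

theorem centralGaussBinom_succ {q : 𝕜} (hq0 : q ≠ 0) (hq : ‖q‖ < 1) (n : ℕ) (k : ℤ) :
    centralGaussBinom q (n + 1) k = (1 + q ^ (2 * n + 1)) * centralGaussBinom q n k +
      q ^ (n + 1 - k) * centralGaussBinom q n (k - 1) +
      q ^ (n + 1 + k) * centralGaussBinom q n (k + 1) := by
  have hg := qFactorialInv_sub_one hq
  have hu : q ^ (n - k : ℤ) = q⁻¹ * q ^ (n + 1 - k : ℤ) := by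
    rw [← zpow_neg_one, ← zpow_add₀ hq0]; congr 1; ring
  have hv : q ^ (n + k : ℤ) = q⁻¹ * q ^ (n + 1 + k : ℤ) := by
    rw [← zpow_neg_one, ← zpow_add₀ hq0]; congr 1; ring
  have huv : q ^ (2 * n + 2) = q ^ (n + 1 - k : ℤ) * q ^ (n + 1 + k : ℤ) := by
    rw [← zpow_natCast, ← zpow_add₀ hq0]; congr 1; push_cast; ring
  have hl : qFactorialInv q (n - k) = (1 - q ^ (n + 1 - k : ℤ)) * qFactorialInv q (n + 1 - k) := by
    rw [← hg]; congr 1; ring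
  have hr : qFactorialInv q (n + k) = (1 - q ^ (n + 1 + k : ℤ)) * qFactorialInv q (n + 1 + k) := by
    rw [← hg]; congr 1; ring
  have hll : qFactorialInv q (n - (k + 1)) = (1 - q ^ (n - k : ℤ)) * qFactorialInv q (n - k) := by
    rw [← hg]; congr 1; ring
  have hrr : qFactorialInv q (n + (k - 1)) = (1 - q ^ (n + k : ℤ)) * qFactorialInv q (n + k) := by
    rw [← hg]; congr 1; ring
  simp only [centralGaussBinom, hll, hrr, hl, hr, hu, hv,
    show (n : ℤ) - (k - 1) = n + 1 - k by ring, show (n : ℤ) + (k + 1) = n + 1 + k by ring,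
    show 2 * (n + 1) = 2 * n + 1 + 1 by ring,
    prod_range_succ, Nat.cast_succ]
  have huv' : q ^ (2 * n + 1) = q⁻¹ * (q ^ (n + 1 - k : ℤ) * q ^ (n + 1 + k : ℤ)) := by
    rw [← huv, eq_inv_mul_iff_mul_eq₀ hq0, ← pow_succ']
  rw [← pow_succ', ← pow_succ', huv, huv']
  ring

theorem mul_theta_term_sub_one {q z : K} (hq : q ≠ 0) (hz : z ≠ 0) (n : ℕ) (k : ℤ) :
    z * q ^ (2 * n + 1) * (q ^ ((k - 1) ^ 2) * z ^ (k - 1)) =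
      (q ^ 2) ^ (n + 1 - k) * (q ^ (k ^ 2) * z ^ k) := by
  have hexp : (q ^ 2) ^ (n + 1 - k) * q ^ (k ^ 2) = q ^ (2 * n + 1) * q ^ ((k - 1) ^ 2) := by
    simp only [← zpow_natCast, ← zpow_mul, ← zpow_add₀ hq]
    congr 1
    push_cast
    ring
  rw [← mul_assoc (_ ^ (n + 1 - k)), hexp, zpow_sub_one₀ hz]
  field_simp

theorem mul_theta_term_add_one {q z : K} (hq : q ≠ 0) (hz : z ≠ 0) (n : ℕ) (k : ℤ) :
    z⁻¹ * q ^ (2 * n + 1) * (q ^ ((k + 1) ^ 2) * z ^ (k + 1)) =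
      (q ^ 2) ^ (n + 1 + k) * (q ^ (k ^ 2) * z ^ k) := by
  have h := mul_theta_term_sub_one hq (inv_ne_zero hz) n (-k)
  rwa [← neg_add', neg_sq, neg_sq, inv_zpow', inv_zpow', neg_neg, neg_neg, sub_neg_eq_add] at h

theorem hasSum_finite_triple_product {q z : 𝕜} (hq0 : q ≠ 0) (hq : ‖q‖ < 1) (hz : z ≠ 0) (n : ℕ) :
    HasSum (fun k : ℤ => centralGaussBinom (q ^ 2) n k * (q ^ (k ^ 2) * z ^ k))
      (∏ i ∈ range n, (1 + z * q ^ (2 * i + 1)) * (1 + z⁻¹ * q ^ (2 * i + 1))) := by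
  induction n with
  | zero =>
    have hsummand : (fun k : ℤ => centralGaussBinom (q ^ 2) 0 k * (q ^ (k ^ 2) * z ^ k)) =
        fun k => if k = 0 then 1 else 0 := by
      funext k
      rw [centralGaussBinom_zero]
      split_ifs with hk <;> simp [hk]
    rw [hsummand, range_zero, prod_empty]
    exact hasSum_ite_eq 0 1
  | succ n ih =>
    have hdown := ((Equiv.subRight (1 : ℤ)).hasSum_iff.2 ih).mul_left (z * q ^ (2 * n + 1))
    have hup := ((Equiv.addRight (1 : ℤ)).hasSum_iff.2 ih).mul_left (z⁻¹ * q ^ (2 * n + 1))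
    have hsum := ((ih.mul_left (1 + (q ^ 2) ^ (2 * n + 1))).add hdown).add hup
    have hfactors (P : 𝕜) :
        P * ((1 + z * q ^ (2 * n + 1)) * (1 + z⁻¹ * q ^ (2 * n + 1))) =
          (1 + (q ^ 2) ^ (2 * n + 1)) * P + z * q ^ (2 * n + 1) * P +
            z⁻¹ * q ^ (2 * n + 1) * P := by
      linear_combination P * (q ^ 2) ^ (2 * n + 1) * mul_inv_cancel₀ hz
    rw [prod_range_succ, hfactors]
    refine hsum.congr_fun fun k => ?_
    rw [centralGaussBinom_succ (pow_ne_zero 2 hq0) (norm_pow_lt_one hq two_ne_zero)]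
    simp only [Function.comp_apply, Equiv.subRight_apply, Equiv.coe_addRight]
    linear_combination -centralGaussBinom (q ^ 2) n (k - 1) * mul_theta_term_sub_one hq0 hz n k -
      centralGaussBinom (q ^ 2) n (k + 1) * mul_theta_term_add_one hq0 hz n k

end FiniteTripleProduct

section ThetaSeries

variable {𝕜 : Type*} [NormedField 𝕜]

/-- The two-variable theta series `θ(z, q) = ∑_{n ∈ ℤ} q^(n²) z^n`, in terms of which
`φ(q) = θ(1, q)` and `ψ(q) = θ(q, q²)`. -/
noncomputable def thetaSeries (z q : 𝕜) : 𝕜 := ∑' n : ℤ, q ^ (n ^ 2) * z ^ n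

theorem thetaSeries_inv (z q : 𝕜) : thetaSeries z⁻¹ q = thetaSeries z q := by
  rw [thetaSeries, thetaSeries, ← (Equiv.neg ℤ).tsum_eq]
  simp only [Equiv.neg_apply, neg_sq, inv_zpow', neg_neg]

theorem tendsto_norm_theta_ratio (z : 𝕜) {q : 𝕜} (hq : ‖q‖ < 1) :
    Tendsto (fun n : ℕ => ‖q ^ (2 * n + 1) * z‖) atTop (𝓝 0) := by
  have hsub : Tendsto (fun n : ℕ => 2 * n + 1) atTop atTop :=
    tendsto_atTop_mono (fun n => by dsimp only [id]; lia) tendsto_id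
  simpa using ((tendsto_pow_atTop_nhds_zero_of_norm_lt_one hq).comp hsub).norm.mul_const ‖z‖

theorem summable_norm_theta_nat {q z : 𝕜} (hq0 : q ≠ 0) (hq : ‖q‖ < 1) (hz : z ≠ 0) :
    Summable fun n : ℕ => ‖q ^ (n ^ 2) * z ^ n‖ := by
  refine summable_of_ratio_test_tendsto_lt_one zero_lt_one
    (Eventually.of_forall fun n => by simp [hq0, hz])
    ((tendsto_norm_theta_ratio z hq).congr fun n => ?_)
  rw [norm_norm, norm_norm, ← norm_div]
  congr 1
  field_simp
  ring

theorem summable_norm_theta {q z : 𝕜} (hq0 : q ≠ 0) (hq : ‖q‖ < 1) (hz : z ≠ 0) :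
    Summable fun n : ℤ => ‖q ^ (n ^ 2) * z ^ n‖ := by
  refine Summable.of_nat_of_neg ?_ ?_
  · exact_mod_cast summable_norm_theta_nat hq0 hq hz
  · refine (summable_norm_theta_nat hq0 hq (inv_ne_zero hz)).congr fun n => ?_
    rw [neg_sq, zpow_neg, inv_pow, zpow_natCast]
    norm_cast

variable [CompleteSpace 𝕜]

theorem tendsto_qFactorialInv {q : 𝕜} (hq : ‖q‖ < 1) :
    Tendsto (qFactorialInv q) atTop (𝓝 (qPochhammer q q)⁻¹) := by
  rw [← Nat.map_cast_int_atTop, tendsto_map'_iff]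
  exact (tendsto_prod_qPochhammer q hq).inv₀ (qPochhammer_ne_zero hq hq)

theorem exists_norm_qFactorialInv_le {q : 𝕜} (hq : ‖q‖ < 1) :
    ∃ C : ℝ, ∀ k, ‖qFactorialInv q k‖ ≤ C := by
  obtain ⟨C, hC⟩ := ((tendsto_prod_qPochhammer q hq).inv₀
    (qPochhammer_ne_zero hq hq)).norm.bddAbove_range
  refine ⟨C, fun k => ?_⟩
  rcases lt_or_ge k 0 with hk | hk
  · rw [qFactorialInv_of_neg q hk, norm_zero]
    exact (norm_nonneg _).trans (hC ⟨0, rfl⟩)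
  · lift k to ℕ using hk
    exact hC ⟨k, rfl⟩

theorem tendsto_centralGaussBinom {q : 𝕜} (hq : ‖q‖ < 1) (k : ℤ) :
    Tendsto (fun n => centralGaussBinom q n k) atTop (𝓝 (qPochhammer q q)⁻¹) := by
  have hsub : Tendsto (fun n : ℕ => (n : ℤ) - k) atTop atTop :=
    tendsto_atTop_add_const_right _ (-k) tendsto_natCast_atTop_atTop
  have hadd : Tendsto (fun n : ℕ => (n : ℤ) + k) atTop atTop :=
    tendsto_atTop_add_const_right _ k tendsto_natCast_atTop_atTop
  have hdouble : Tendsto (fun n : ℕ => 2 * n) atTop atTop :=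
    tendsto_id.const_mul_atTop' two_pos
  have hg := tendsto_qFactorialInv hq
  have h := ((tendsto_prod_qPochhammer q hq).comp hdouble).mul ((hg.comp hsub).mul (hg.comp hadd))
  rwa [mul_inv_cancel_left₀ (qPochhammer_ne_zero hq hq)] at h

theorem exists_norm_centralGaussBinom_le {q : 𝕜} (hq : ‖q‖ < 1) :
    ∃ C : ℝ, ∀ n k, ‖centralGaussBinom q n k‖ ≤ C := by
  obtain ⟨C, hC⟩ := (tendsto_prod_qPochhammer q hq).norm.bddAbove_range
  obtain ⟨D, hD⟩ := exists_norm_qFactorialInv_le hq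
  refine ⟨C * (D * D), fun n k => ?_⟩
  have hC' : ‖∏ i ∈ range (2 * n), (1 - q * q ^ i)‖ ≤ C := hC ⟨2 * n, rfl⟩
  have hC0 : 0 ≤ C := (norm_nonneg _).trans hC'
  have hD0 : 0 ≤ D := (norm_nonneg _).trans (hD 0)
  rw [centralGaussBinom, norm_mul, norm_mul]
  gcongr <;> exact hD _

theorem jacobi_triple_product {q z : 𝕜} (hq0 : q ≠ 0) (hq : ‖q‖ < 1) (hz : z ≠ 0) :
    thetaSeries z q = qPochhammer (q ^ 2) (q ^ 2) *
      (qPochhammer (-(z * q)) (q ^ 2) * qPochhammer (-(z⁻¹ * q)) (q ^ 2)) := by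
  have hq2 : ‖q ^ 2‖ < 1 := norm_pow_lt_one hq two_ne_zero
  obtain ⟨C, hC⟩ := exists_norm_centralGaussBinom_le hq2
  have hsum : Tendsto (fun n => ∑' k : ℤ, centralGaussBinom (q ^ 2) n k * (q ^ (k ^ 2) * z ^ k))
      atTop (𝓝 (∑' k : ℤ, (qPochhammer (q ^ 2) (q ^ 2))⁻¹ * (q ^ (k ^ 2) * z ^ k))) := by
    refine tendsto_tsum_of_dominated_convergence ((summable_norm_theta hq0 hq hz).mul_left C)
      (fun k => (tendsto_centralGaussBinom hq2 k).mul_const _)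
      (Eventually.of_forall fun n k => ?_)
    rw [norm_mul]
    gcongr
    exact hC n k
  have hprod := (tendsto_prod_qPochhammer (-(z * q)) hq2).mul
    (tendsto_prod_qPochhammer (-(z⁻¹ * q)) hq2)
  have h := tendsto_nhds_unique hsum (hprod.congr fun n => ?_)
  · rw [← h, tsum_mul_left, mul_inv_cancel_left₀ (qPochhammer_ne_zero hq2 hq2), thetaSeries]
  · rw [(hasSum_finite_triple_product hq0 hq hz n).tsum_eq, ← prod_mul_distrib]
    refine prod_congr rfl fun i _ => ?_
    ring

end ThetaSeries

section ProductFormulas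

variable {𝕜 : Type*} [NormedField 𝕜] [CompleteSpace 𝕜] {q : 𝕜}

theorem thetaSeries_one_eq_qPochhammer (hq0 : q ≠ 0) (hq : ‖q‖ < 1) :
    thetaSeries 1 q = qPochhammer (q ^ 2) (q ^ 2) * qPochhammer (-q) (q ^ 2) ^ 2 := by
  rw [jacobi_triple_product hq0 hq one_ne_zero, inv_one, one_mul, sq (qPochhammer _ _)]

theorem thetaSeries_self_sq_eq_qPochhammer (hq0 : q ≠ 0) (hq : ‖q‖ < 1) :
    thetaSeries q (q ^ 2) = qPochhammer (q ^ 4) (q ^ 4) * qPochhammer (-q) (q ^ 2) := by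
  have hq2 := norm_pow_lt_one hq two_ne_zero
  rw [jacobi_triple_product (pow_ne_zero 2 hq0) hq2 hq0, qPochhammer_eq_even_mul_odd (-q) hq2, sq q,
    inv_mul_cancel_left₀ hq0]
  ring_nf

theorem qPochhammer_mul_neg_mul_sq (hq : ‖q‖ < 1) :
    qPochhammer q (q ^ 2) * qPochhammer (-q) (q ^ 2) * qPochhammer (q ^ 4) (q ^ 4) =
      qPochhammer (q ^ 2) (q ^ 2) := by
  have hq2 := norm_pow_lt_one hq two_ne_zero
  rw [qPochhammer_mul_neg q hq2, qPochhammer_eq_even_mul_odd (q ^ 2) hq2]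
  ring_nf

theorem thetaSeries_one_mul_neg (hq0 : q ≠ 0) (hq : ‖q‖ < 1) :
    thetaSeries 1 q * thetaSeries 1 (-q) = thetaSeries 1 (-q ^ 2) ^ 2 := by
  have hq2 := norm_pow_lt_one hq two_ne_zero
  have hodd := qPochhammer_mul_neg q hq2
  have hfactor := qPochhammer_mul_neg_mul_sq hq
  rw [thetaSeries_one_eq_qPochhammer hq0 hq,
    thetaSeries_one_eq_qPochhammer (neg_ne_zero.2 hq0) (by rwa [norm_neg]),
    thetaSeries_one_eq_qPochhammer (neg_ne_zero.2 (pow_ne_zero 2 hq0)) (by rwa [norm_neg])]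
  simp only [neg_neg, neg_sq, ← pow_mul, Nat.reduceMul] at hodd ⊢
  rw [← hodd, ← hfactor]
  ring

theorem thetaSeries_self_sq_sq (hq0 : q ≠ 0) (hq : ‖q‖ < 1) :
    thetaSeries q (q ^ 2) ^ 2 = thetaSeries 1 q * thetaSeries (q ^ 2) (q ^ 4) := by
  have hq2 := norm_pow_lt_one hq two_ne_zero
  have hhalf := thetaSeries_self_sq_eq_qPochhammer (pow_ne_zero 2 hq0) hq2
  have hodd := qPochhammer_mul_neg q hq2
  have hfactor := qPochhammer_mul_neg_mul_sq hq
  have hfactor2 := qPochhammer_mul_neg_mul_sq hq2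
  rw [thetaSeries_self_sq_eq_qPochhammer hq0 hq, thetaSeries_one_eq_qPochhammer hq0 hq]
  simp only [← pow_mul, Nat.reduceMul] at hhalf hodd hfactor2 ⊢
  rw [hhalf, ← hfactor, hodd]
  linear_combination -(qPochhammer (-q) (q ^ 2) ^ 2 * qPochhammer (q ^ 4) (q ^ 4)) * hfactor2

theorem thetaSeries_sq_mul_thetaSeries_one_neg (hq0 : q ≠ 0) (hq : ‖q‖ < 1) :
    thetaSeries (q ^ 2) (q ^ 4) * thetaSeries 1 (-q) * qPochhammer (-q) (q ^ 2) ^ 2 =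
      qPochhammer (q ^ 2) (q ^ 2) ^ 2 := by
  have hq2 := norm_pow_lt_one hq two_ne_zero
  have hhalf := thetaSeries_self_sq_eq_qPochhammer (pow_ne_zero 2 hq0) hq2
  have hodd := qPochhammer_mul_neg q hq2
  have hfactor := qPochhammer_mul_neg_mul_sq hq
  have hfactor2 := qPochhammer_mul_neg_mul_sq hq2
  rw [thetaSeries_one_eq_qPochhammer (neg_ne_zero.2 hq0) (by rwa [norm_neg])]
  simp only [neg_neg, neg_sq, ← pow_mul, Nat.reduceMul] at hhalf hodd hfactor2 ⊢
  rw [hhalf, ← hfactor, ← hfactor2, ← hodd]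
  ring

end ProductFormulas

section GaussianIntegers

/-- Representatives `(a, c)` of the classes of `ℤ²` modulo the sublattice `5 ∣ 2a + c`, the `i`-th
one satisfying `2a + c ≡ i`. Identifying `(a, c)` with `a + c i`, this is `ℤ[i]` modulo a prime
above `5`. -/
def cosetRep : Fin 5 → ℤ × ℤ := ![(0, 0), (0, 1), (1, 0), (-1, 0), (0, -1)]

theorem cosetRep_modEq (i : Fin 5) : 2 * (cosetRep i).1 + (cosetRep i).2 ≡ i [ZMOD 5] := by
  fin_cases i <;> rfl

theorem bijective_cosetRep_add : Function.Bijective fun c : Fin 5 × ℤ × ℤ =>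
    ((cosetRep c.1).1 + (c.2.1 + 2 * c.2.2), (cosetRep c.1).2 + (c.2.2 - 2 * c.2.1)) := by
  constructor
  · rintro ⟨i, x, y⟩ ⟨j, x', y'⟩ h
    have hi := cosetRep_modEq i
    have hj := cosetRep_modEq j
    rw [Prod.mk.injEq] at h
    obtain ⟨h1, h2⟩ := h
    dsimp only at h1 h2
    have hij : i = j := by
      rw [Int.ModEq] at hi hj
      exact Fin.ext (by omega)
    subst hij
    simp only [Prod.mk.injEq, true_and]
    lia
  · rintro ⟨m, n⟩
    let i : Fin 5 := ⟨((2 * m + n) % 5).toNat, by lia⟩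
    have hi := cosetRep_modEq i
    simp only [Int.ModEq, i] at hi
    refine ⟨(i, (m - (cosetRep i).1 - 2 * (n - (cosetRep i).2)) / 5,
      (2 * (m - (cosetRep i).1) + (n - (cosetRep i).2)) / 5), ?_⟩
    ext <;> dsimp only [i] <;> lia

variable {𝕜 : Type*} [NormedField 𝕜] [CompleteSpace 𝕜] {q v : 𝕜}

theorem tsum_eq_sum_tsum_coset {f : ℤ × ℤ → 𝕜} (hf : Summable f) :
    ∑' p, f p = ∑ i, ∑' p : ℤ × ℤ,
      f ((cosetRep i).1 + (p.1 + 2 * p.2), (cosetRep i).2 + (p.2 - 2 * p.1)) := by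
  let e := Equiv.ofBijective _ bijective_cosetRep_add
  rw [← e.tsum_eq]
  exact (Summable.tsum_prod (e.summable_iff.2 hf)).trans (tsum_fintype _)

theorem thetaSeries_mul_thetaSeries {u v q : 𝕜} (hq0 : q ≠ 0) (hq : ‖q‖ < 1) (hu : u ≠ 0)
    (hv : v ≠ 0) : thetaSeries u q * thetaSeries v q =
      ∑' p : ℤ × ℤ, q ^ (p.1 ^ 2) * u ^ p.1 * (q ^ (p.2 ^ 2) * v ^ p.2) :=
  tsum_mul_tsum_of_summable_norm (summable_norm_theta hq0 hq hu) (summable_norm_theta hq0 hq hv)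

theorem tsum_coset (hq0 : q ≠ 0) (hq : ‖q‖ < 1) (hv : v ^ 5 = 1) (a c : ℤ) :
    ∑' p : ℤ × ℤ, q ^ ((a + (p.1 + 2 * p.2)) ^ 2) * (v ^ 2) ^ (a + (p.1 + 2 * p.2)) *
      (q ^ ((c + (p.2 - 2 * p.1)) ^ 2) * v ^ (c + (p.2 - 2 * p.1))) =
    q ^ (a ^ 2 + c ^ 2) * v ^ (2 * a + c) * (thetaSeries (q ^ (2 * a - 4 * c)) (q ^ 5) *
      thetaSeries (q ^ (4 * a + 2 * c)) (q ^ 5)) := by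
  have hq5 : ‖q ^ 5‖ < 1 := norm_pow_lt_one hq (by norm_num)
  have hq50 : q ^ 5 ≠ 0 := pow_ne_zero _ hq0
  have hv0 : v ≠ 0 := by
    rintro rfl
    norm_num at hv
  rw [thetaSeries_mul_thetaSeries hq50 hq5 (zpow_ne_zero _ hq0) (zpow_ne_zero _ hq0),
    ← tsum_mul_left]
  refine tsum_congr fun ⟨x, y⟩ => ?_
  dsimp only
  have hnorm : q ^ ((a + (x + 2 * y)) ^ 2) * q ^ ((c + (y - 2 * x)) ^ 2) =
      q ^ (a ^ 2 + c ^ 2) * ((q ^ 5) ^ (x ^ 2) * (q ^ (2 * a - 4 * c)) ^ x *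
        ((q ^ 5) ^ (y ^ 2) * (q ^ (4 * a + 2 * c)) ^ y)) := by
    simp only [← zpow_natCast q 5, ← zpow_mul, ← zpow_add₀ hq0]
    congr 1
    push_cast
    ring
  have hchar : (v ^ 2) ^ (a + (x + 2 * y)) * v ^ (c + (y - 2 * x)) = v ^ (2 * a + c) := by
    have h5 : v ^ (5 * y) = 1 := by rw [zpow_mul, zpow_ofNat, hv, one_zpow]
    rw [← mul_one (v ^ (2 * a + c)), ← h5]
    simp only [← zpow_natCast v 2, ← zpow_mul, ← zpow_add₀ hv0]
    congr 1
    push_cast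
    ring
  rw [mul_mul_mul_comm, hnorm, hchar, mul_right_comm]

theorem thetaSeries_sq_mul_thetaSeries (hq0 : q ≠ 0) (hq : ‖q‖ < 1) (hv : v ^ 5 = 1) :
    thetaSeries (v ^ 2) q * thetaSeries v q = thetaSeries 1 (q ^ 5) ^ 2 +
      (v + v ^ 2 + v ^ 3 + v ^ 4) *
        (q * (thetaSeries (q ^ 4) (q ^ 5) * thetaSeries (q ^ 2) (q ^ 5))) := by
  have hv0 : v ≠ 0 := by
    rintro rfl
    norm_num at hv
  have hv1 : v⁻¹ = v ^ 4 := inv_eq_of_mul_eq_one_right (by rw [← pow_succ', hv])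
  have hv2 : (v ^ 2)⁻¹ = v ^ 3 := inv_eq_of_mul_eq_one_right (by rw [← pow_add, hv])
  have hsummable := ((summable_norm_theta hq0 hq (pow_ne_zero 2 hv0)).mul_norm
    (summable_norm_theta hq0 hq hv0)).of_norm
  rw [thetaSeries_mul_thetaSeries hq0 hq (pow_ne_zero 2 hv0) hv0,
    tsum_eq_sum_tsum_coset hsummable, Fin.sum_univ_five]
  simp only [tsum_coset hq0 hq hv]
  simp only [cosetRep, Matrix.cons_val]
  simp only [thetaSeries_inv, hv1, hv2, zpow_neg, zpow_ofNat, mul_neg, mul_zero, mul_one, neg_sq,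
    ne_eq, OfNat.ofNat_ne_zero, not_false_eq_true, zero_pow, one_pow, add_zero, zero_add, sub_zero,
    zero_sub, sub_neg_eq_add, pow_zero, pow_one, one_mul]
  ring

end GaussianIntegers

section QuinticRelation

variable {𝕜 : Type*} [NormedField 𝕜] [CompleteSpace 𝕜] {q ζ : 𝕜}

theorem thetaSeries_fifth_roots_mul (hζ : IsPrimitiveRoot ζ 5) (hq0 : q ≠ 0) (hq : ‖q‖ < 1) :
    thetaSeries (ζ ^ 2) q * thetaSeries ζ q * qPochhammer (-q) (q ^ 2) =
      qPochhammer (q ^ 2) (q ^ 2) ^ 2 * qPochhammer (-q ^ 5) (q ^ 10) := by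
  have hζ0 := hζ.ne_zero (by norm_num)
  have hinv : ζ⁻¹ = ζ ^ 4 :=
    inv_eq_of_mul_eq_one_right ((pow_succ' ζ 4).symm.trans hζ.pow_eq_one)
  have hinv_sq : (ζ ^ 2)⁻¹ = ζ ^ 3 :=
    inv_eq_of_mul_eq_one_right ((pow_add ζ 2 3).symm.trans hζ.pow_eq_one)
  have hroots := qPochhammer_prod_roots_of_unity hζ (by norm_num) (-q)
    (norm_pow_lt_one hq two_ne_zero)
  simp only [prod_range_succ, prod_range_zero, one_mul, pow_zero, pow_one, mul_neg, ← pow_mul,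
    Nat.reduceMul, Odd.neg_pow (by decide : Odd 5)] at hroots
  rw [jacobi_triple_product hq0 hq (pow_ne_zero 2 hζ0), jacobi_triple_product hq0 hq hζ0, hinv,
    hinv_sq, ← hroots]
  ring

theorem thetaSeries_residues_mul (hq0 : q ≠ 0) (hq : ‖q‖ < 1) :
    thetaSeries (q ^ 4) (q ^ 5) * thetaSeries (q ^ 2) (q ^ 5) * qPochhammer (-q ^ 5) (q ^ 10) =
      qPochhammer (q ^ 10) (q ^ 10) ^ 2 * qPochhammer (-q) (q ^ 2) := by
  have hq5 := norm_pow_lt_one hq (n := 5) (by norm_num)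
  have hinv4 : (q ^ 4)⁻¹ * q ^ 5 = q := by field_simp
  have hinv2 : (q ^ 2)⁻¹ * q ^ 5 = q ^ 3 := by field_simp
  rw [jacobi_triple_product (pow_ne_zero 5 hq0) hq5 (pow_ne_zero 4 hq0),
    jacobi_triple_product (pow_ne_zero 5 hq0) hq5 (pow_ne_zero 2 hq0), hinv4, hinv2,
    qPochhammer_eq_prod_residues (-q) (norm_pow_lt_one hq two_ne_zero) (m := 5) (by norm_num)]
  simp only [prod_range_succ, prod_range_zero, one_mul, mul_one, ← pow_mul, ← pow_add,
    Nat.reduceMul, Nat.reduceAdd, neg_mul, ← pow_succ', pow_one]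
  ring

theorem thetaSeries_one_sq_sub (hq0 : q ≠ 0) (hq : ‖q‖ < 1) :
    thetaSeries 1 q ^ 2 - thetaSeries 1 (q ^ 5) ^ 2 =
      4 * q * (thetaSeries (q ^ 4) (q ^ 5) * thetaSeries (q ^ 2) (q ^ 5)) := by
  have h := thetaSeries_sq_mul_thetaSeries hq0 hq (one_pow 5)
  simp only [one_pow] at h
  linear_combination h

theorem five_mul_thetaSeries_one_sq_sub (hζ : IsPrimitiveRoot ζ 5) (hq0 : q ≠ 0) (hq : ‖q‖ < 1) :
    5 * thetaSeries 1 (q ^ 5) ^ 2 - thetaSeries 1 q ^ 2 =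
      4 * (thetaSeries (ζ ^ 2) q * thetaSeries ζ q) := by
  have hgeom : ζ + ζ ^ 2 + ζ ^ 3 + ζ ^ 4 = -1 := by
    have := hζ.geom_sum_eq_zero (by norm_num)
    simp only [sum_range_succ, sum_range_zero] at this
    linear_combination this
  have h := thetaSeries_sq_mul_thetaSeries hq0 hq hζ.pow_eq_one
  rw [hgeom] at h
  linear_combination -4 * h - thetaSeries_one_sq_sub hq0 hq

theorem thetaSeries_fifth_roots_eq (hζ : IsPrimitiveRoot ζ 5) (hq0 : q ≠ 0) (hq : ‖q‖ < 1) :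
    thetaSeries (ζ ^ 2) q * thetaSeries ζ q *
        (thetaSeries (q ^ 10) (q ^ 20) * thetaSeries 1 (-q ^ 5)) =
      thetaSeries (q ^ 2) (q ^ 4) * thetaSeries 1 (-q) *
        (thetaSeries (q ^ 4) (q ^ 5) * thetaSeries (q ^ 2) (q ^ 5)) := by
  have hq2 := norm_pow_lt_one hq two_ne_zero
  have hq5 := norm_pow_lt_one hq (n := 5) (by norm_num)
  have hq10 := norm_pow_lt_one hq (n := 10) (by norm_num)
  have hroots := thetaSeries_fifth_roots_mul hζ hq0 hq
  have hresidues := thetaSeries_residues_mul hq0 hq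
  have hpsi := thetaSeries_sq_mul_thetaSeries_one_neg hq0 hq
  have hpsi5 := thetaSeries_sq_mul_thetaSeries_one_neg (pow_ne_zero 5 hq0) hq5
  simp only [← pow_mul, Nat.reduceMul] at hpsi5
  set u := qPochhammer (-q) (q ^ 2)
  set w := qPochhammer (-q ^ 5) (q ^ 10)
  have hu0 : u ≠ 0 := qPochhammer_ne_zero (by rwa [norm_neg]) hq2
  have hw0 : w ≠ 0 := qPochhammer_ne_zero (by rwa [norm_neg]) hq10
  refine mul_right_cancel₀ (mul_ne_zero (pow_ne_zero 2 hu0) (pow_ne_zero 2 hw0)) ?_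
  linear_combination
    thetaSeries (q ^ 10) (q ^ 20) * thetaSeries 1 (-q ^ 5) * u * w ^ 2 * hroots +
    qPochhammer (q ^ 2) (q ^ 2) ^ 2 * u * w * hpsi5 -
    thetaSeries (q ^ 4) (q ^ 5) * thetaSeries (q ^ 2) (q ^ 5) * w ^ 2 * hpsi -
    qPochhammer (q ^ 2) (q ^ 2) ^ 2 * w * hresidues

theorem thetaSeries_quintic (hζ : IsPrimitiveRoot ζ 5) (hq0 : q ≠ 0) (hq : ‖q‖ < 1) :
    (5 * thetaSeries 1 (q ^ 5) ^ 2 - thetaSeries 1 q ^ 2) *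
        (q * thetaSeries (q ^ 10) (q ^ 20) * thetaSeries 1 (-q ^ 5)) =
      thetaSeries (q ^ 2) (q ^ 4) * thetaSeries 1 (-q) *
        (thetaSeries 1 q ^ 2 - thetaSeries 1 (q ^ 5) ^ 2) := by
  rw [five_mul_thetaSeries_one_sq_sub hζ hq0 hq, thetaSeries_one_sq_sub hq0 hq]
  linear_combination 4 * q * thetaSeries_fifth_roots_eq hζ hq0 hq

end QuinticRelation

section RealTheta

variable {q : ℝ}

theorem phi_eq_thetaSeries (q : ℝ) : phi q = thetaSeries 1 q := by
  simp only [phi, thetaSeries, one_zpow, mul_one]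

theorem abs_pow_lt_one (hq : |q| < 1) {n : ℕ} (hn : n ≠ 0) : |q ^ n| < 1 :=
  norm_pow_lt_one (𝕜 := ℝ) hq hn

theorem psi_eq_thetaSeries (hq0 : q ≠ 0) (hq : |q| < 1) : psi q = thetaSeries q (q ^ 2) := by
  have heven (n : ℕ) : (q ^ 2) ^ ((n : ℤ) ^ 2) * q ^ (n : ℤ) = q ^ (2 * n * (2 * n + 1) / 2) := by
    have hexp : 2 * n * (2 * n + 1) / 2 = 2 * n ^ 2 + n := by
      rw [mul_assoc, Nat.mul_div_cancel_left _ two_pos]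
      ring
    rw [hexp, pow_add, pow_mul]
    norm_cast
  have hodd (n : ℕ) : (q ^ 2) ^ ((-((n : ℤ) + 1)) ^ 2) * q ^ (-((n : ℤ) + 1)) =
      q ^ ((2 * n + 1) * (2 * n + 1 + 1) / 2) := by
    have hexp : (2 * n + 1) * (2 * n + 1 + 1) / 2 = (2 * n + 1) * (n + 1) := by
      rw [add_assoc, one_add_one_eq_two, ← mul_add_one 2, mul_left_comm,
        Nat.mul_div_cancel_left _ two_pos]
    rw [hexp]
    simp only [← zpow_natCast, ← zpow_mul, ← zpow_add₀ hq0]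
    congr 1
    push_cast
    ring
  let f (n : ℤ) : ℝ := (q ^ 2) ^ (n ^ 2) * q ^ n
  have hsum : Summable f :=
    (summable_norm_theta (pow_ne_zero 2 hq0) (norm_pow_lt_one hq two_ne_zero) hq0).of_norm
  have hsum_even : Summable fun n : ℕ => f n := hsum.comp_injective Nat.cast_injective
  have hsum_odd : Summable fun n : ℕ => f (-(n + 1)) :=
    hsum.comp_injective (i := fun n : ℕ => -((n : ℤ) + 1)) fun m n h => by lia
  refine Eq.trans ?_ (tsum_of_nat_of_neg_add_one hsum_even hsum_odd).symm
  simp only [f, heven, hodd] at hsum_even hsum_odd ⊢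
  exact (tsum_even_add_odd (f := fun n : ℕ => q ^ (n * (n + 1) / 2)) hsum_even hsum_odd).symm

theorem ofReal_thetaSeries (z q : ℝ) : ((thetaSeries z q : ℝ) : ℂ) = thetaSeries (z : ℂ) q := by
  simp only [thetaSeries, Complex.ofReal_tsum, Complex.ofReal_mul, Complex.ofReal_zpow]

theorem phi_pos (hq0 : q ≠ 0) (hq : |q| < 1) : 0 < phi q := by
  have hq2 : |q ^ 2| < 1 := abs_pow_lt_one hq two_ne_zero
  rw [phi_eq_thetaSeries, thetaSeries_one_eq_qPochhammer hq0 hq]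
  have := qPochhammer_pos hq2 hq2
  have := qPochhammer_pos (by rwa [abs_neg] : |-q| < 1) hq2
  positivity

theorem psi_pos (hq0 : q ≠ 0) (hq : |q| < 1) : 0 < psi q := by
  have hq2 : |q ^ 2| < 1 := abs_pow_lt_one hq two_ne_zero
  have hq4 : |q ^ 4| < 1 := abs_pow_lt_one hq four_ne_zero
  rw [psi_eq_thetaSeries hq0 hq, thetaSeries_self_sq_eq_qPochhammer hq0 hq]
  exact mul_pos (qPochhammer_pos hq4 hq4) (qPochhammer_pos (by rwa [abs_neg]) hq2)

theorem phi_mul_phi_neg (hq0 : q ≠ 0) (hq : |q| < 1) : phi q * phi (-q) = phi (-q ^ 2) ^ 2 := by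
  simp only [phi_eq_thetaSeries]
  exact thetaSeries_one_mul_neg hq0 hq

theorem psi_sq (hq0 : q ≠ 0) (hq : |q| < 1) : psi q ^ 2 = phi q * psi (q ^ 2) := by
  rw [psi_eq_thetaSeries hq0 hq, thetaSeries_self_sq_sq hq0 hq, phi_eq_thetaSeries,
    psi_eq_thetaSeries (pow_ne_zero 2 hq0) (abs_pow_lt_one hq two_ne_zero), ← pow_mul]

theorem phi_psi_quintic (hq0 : q ≠ 0) (hq : |q| < 1) :
    (5 * phi (q ^ 5) ^ 2 - phi q ^ 2) * (q * psi (q ^ 10) * phi (-q ^ 5)) =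
      psi (q ^ 2) * phi (-q) * (phi q ^ 2 - phi (q ^ 5) ^ 2) := by
  have h := thetaSeries_quintic (Complex.isPrimitiveRoot_exp 5 (by norm_num))
    (Complex.ofReal_ne_zero.2 hq0) (by rwa [Complex.norm_real])
  rw [psi_eq_thetaSeries (pow_ne_zero 10 hq0) (abs_pow_lt_one hq (by decide)),
    psi_eq_thetaSeries (pow_ne_zero 2 hq0) (abs_pow_lt_one hq two_ne_zero)]
  simp only [phi_eq_thetaSeries, ← pow_mul, Nat.reduceMul]
  apply Complex.ofReal_injective
  simpa only [Complex.ofReal_mul, Complex.ofReal_sub, Complex.ofReal_pow, Complex.ofReal_neg,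
    Complex.ofReal_one, Complex.ofReal_ofNat, ofReal_thetaSeries] using h

end RealTheta

section Quotients

variable {q : ℝ}

/-- The product `ψ(-q)² φ(-q²)²` of which `b s t` compares the values at two nomes. -/
noncomputable def thetaProduct (q : ℝ) : ℝ := psi (-q) ^ 2 * phi (-q ^ 2) ^ 2

/-- The quotient `φ(q) / φ(q⁵)`, whose square is the multiplier of degree five. -/
noncomputable def phiQuotient (q : ℝ) : ℝ := phi q / phi (q ^ 5)

/-- The quotient `ψ(q²) / (q ψ(q¹⁰))`; the factor `q` makes it odd in `q`. -/
noncomputable def psiQuotient (q : ℝ) : ℝ := psi (q ^ 2) / (q * psi (q ^ 10))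

theorem phiQuotient_pos (hq0 : q ≠ 0) (hq : |q| < 1) : 0 < phiQuotient q :=
  div_pos (phi_pos hq0 hq) (phi_pos (pow_ne_zero 5 hq0) (abs_pow_lt_one hq (by decide)))

theorem psiQuotient_pos (hq0 : 0 < q) (hq : q < 1) : 0 < psiQuotient q := by
  have hq' : |q| < 1 := by rwa [abs_of_pos hq0]
  have h2 := psi_pos (pow_ne_zero 2 hq0.ne') (abs_pow_lt_one hq' two_ne_zero)
  have h10 := psi_pos (pow_ne_zero 10 hq0.ne') (abs_pow_lt_one hq' (by norm_num))
  exact div_pos h2 (mul_pos hq0 h10)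

theorem psiQuotient_neg (q : ℝ) : psiQuotient (-q) = -psiQuotient q := by
  rw [psiQuotient, psiQuotient, neg_sq, Even.neg_pow (by decide), neg_mul, div_neg]

theorem five_sub_phiQuotient_sq (hq0 : q ≠ 0) (hq : |q| < 1) :
    5 - phiQuotient q ^ 2 = psiQuotient q * phiQuotient (-q) * (phiQuotient q ^ 2 - 1) := by
  have hq5 : |q ^ 5| < 1 := abs_pow_lt_one hq (by decide)
  have hphi := (phi_pos (pow_ne_zero 5 hq0) hq5).ne'
  have hphi_neg := (phi_pos (neg_ne_zero.2 (pow_ne_zero 5 hq0)) (by rwa [abs_neg])).ne'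
  have hpsi := (psi_pos (pow_ne_zero 10 hq0) (abs_pow_lt_one hq (by decide))).ne'
  rw [phiQuotient, phiQuotient, psiQuotient, Odd.neg_pow (by decide)]
  field_simp
  linear_combination phi_psi_quintic hq0 hq

theorem thetaProduct_eq (hq0 : q ≠ 0) (hq : |q| < 1) :
    thetaProduct q = phi q * phi (-q) ^ 2 * psi (q ^ 2) := by
  rw [thetaProduct, psi_sq (neg_ne_zero.2 hq0) (by rwa [abs_neg]), ← phi_mul_phi_neg hq0 hq, neg_sq]
  ring

theorem thetaProduct_sq_eq (hq0 : q ≠ 0) (hq : |q| < 1) :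
    thetaProduct (q ^ 2) = phi q * phi (-q) * psi (q ^ 2) ^ 2 := by
  have hq2 : |q ^ 2| < 1 := abs_pow_lt_one hq two_ne_zero
  rw [thetaProduct_eq (pow_ne_zero 2 hq0) hq2, phi_mul_phi_neg hq0 hq,
    psi_sq (pow_ne_zero 2 hq0) hq2]
  ring

theorem five_mul_thetaProduct_div (hq0 : q ≠ 0) (hq : |q| < 1) :
    5 * q * thetaProduct (q ^ 5) / thetaProduct q =
      5 / (phiQuotient q * psiQuotient q * phiQuotient (-q) ^ 2) := by
  rw [thetaProduct_eq hq0 hq, thetaProduct_eq (pow_ne_zero 5 hq0) (abs_pow_lt_one hq (by decide)),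
    phiQuotient, phiQuotient, psiQuotient, Odd.neg_pow (by decide), ← pow_mul]
  field_simp

theorem five_mul_thetaProduct_sq_div (hq0 : q ≠ 0) (hq : |q| < 1) :
    5 * q ^ 2 * thetaProduct ((q ^ 2) ^ 5) / thetaProduct (q ^ 2) =
      5 / (phiQuotient q * psiQuotient q ^ 2 * phiQuotient (-q)) := by
  rw [pow_right_comm q 2 5, thetaProduct_sq_eq hq0 hq,
    thetaProduct_sq_eq (pow_ne_zero 5 hq0) (abs_pow_lt_one hq (by decide)),
    phiQuotient, phiQuotient, psiQuotient, Odd.neg_pow (by decide), ← pow_mul]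
  field_simp

theorem b_five_eq (s : ℝ) {q : ℝ} (hq : q = Real.exp (-(π * √(s / 5)))) :
    b s 5 = 5 * q * thetaProduct (q ^ 5) / thetaProduct q := by
  have h5 : √(s * 5) = 5 * √(s / 5) := by
    rw [show s * 5 = 5 ^ 2 * (s / 5) by ring, Real.sqrt_mul (by positivity),
      Real.sqrt_sq (by norm_num)]
  rw [b, h5, hq, thetaProduct, thetaProduct]
  simp only [← Real.exp_nat_mul]
  push_cast
  ring_nf

end Quotients

section Elimination

theorem quotient_relations_of_quintic {p r t : ℝ} (hp : 0 < p) (hr : 0 < r)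
    (h : 5 - p ^ 2 = t * r * (p ^ 2 - 1)) (h_neg : 5 - r ^ 2 = -t * p * (r ^ 2 - 1)) :
    p * (t + r) = 5 + t * r ∧ p * (t * r + 1) = t + r := by
  have helim : p ^ 2 * r ^ 2 - 4 * p * r - p ^ 2 - r ^ 2 + 5 = 0 := by
    have : (p + r) * (p ^ 2 * r ^ 2 - 4 * p * r - p ^ 2 - r ^ 2 + 5) = 0 := by
      linear_combination -p * (r ^ 2 - 1) * h - r * (p ^ 2 - 1) * h_neg
    exact (mul_eq_zero.1 this).resolve_left (by positivity)
  have hp1 : p ^ 2 - 1 ≠ 0 := by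
    intro hp1
    rw [hp1] at h
    linarith
  have hsum : p * (t + r) = 5 + t * r := by
    apply mul_left_cancel₀ (mul_ne_zero hr.ne' hp1)
    linear_combination (-(p - r)) * h + p * helim
  refine ⟨hsum, mul_left_cancel₀ (mul_ne_zero hp.ne' hp1) ?_⟩
  linear_combination (-(p ^ 2 - 1)) * hsum - p ^ 2 * h + h

theorem modular_equation_of_quotient_relations {p r t : ℝ} (hp : p ≠ 0) (hr : r ≠ 0) (ht : t ≠ 0)
    (h1 : p * (t + r) = 5 + t * r) (h2 : p * (t * r + 1) = t + r) :
    (t / r) ^ 2 + (r / t) ^ 2 - 3 * (t / r + r / t) -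
      5 * (5 / (p * t * r ^ 2) + 5 / (p * t ^ 2 * r) + p * t * r ^ 2 / 5 + p * t ^ 2 * r / 5) -
        12 = 0 := by
  have hprod : (t + r) ^ 2 = (5 + t * r) * (1 + t * r) := by
    apply mul_left_cancel₀ hp
    linear_combination (t + r) * h1 - (5 + t * r) * h2
  have hnum : p * (t ^ 4 + r ^ 4) - 3 * p * (r * t) * (t ^ 2 + r ^ 2) - 25 * (r + t) -
      p ^ 2 * t ^ 3 * r ^ 3 * (r + t) - 12 * p * r ^ 2 * t ^ 2 = 0 := by
    linear_combination 25 * h2 - p * (t * r) ^ 3 * h1 +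
      p * ((t + r) ^ 2 + (5 + t * r) * (1 + t * r) - 7 * (t * r)) * hprod
  field_simp
  linear_combination hnum

end Elimination

theorem thetaProduct_quotients_modular_equation {q : ℝ} (hq0 : 0 < q) (hq : q < 1) {A B : ℝ}
    (hA : A = 5 * q * thetaProduct (q ^ 5) / thetaProduct q)
    (hB : B = 5 * q ^ 2 * thetaProduct ((q ^ 2) ^ 5) / thetaProduct (q ^ 2)) :
    0 < A ∧ 0 < B ∧
      (A / B) ^ 2 + (B / A) ^ 2 - 3 * (A / B + B / A) - 5 * (A + B + 1 / A + 1 / B) - 12 = 0 := by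
  have hq' : |q| < 1 := by rwa [abs_of_pos hq0]
  have hneg0 : -q ≠ 0 := neg_ne_zero.2 hq0.ne'
  have hneg : |-q| < 1 := by rwa [abs_neg]
  have hp := phiQuotient_pos hq0.ne' hq'
  have hr := phiQuotient_pos hneg0 hneg
  have ht := psiQuotient_pos hq0 hq
  have hquintic_neg := five_sub_phiQuotient_sq hneg0 hneg
  rw [psiQuotient_neg, neg_neg] at hquintic_neg
  obtain ⟨hsum, hprod⟩ := quotient_relations_of_quintic hp hr
    (five_sub_phiQuotient_sq hq0.ne' hq') hquintic_neg
  have h := modular_equation_of_quotient_relations hp.ne' hr.ne' ht.ne' hsum hprod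
  rw [five_mul_thetaProduct_div hq0.ne' hq'] at hA
  rw [five_mul_thetaProduct_sq_div hq0.ne' hq'] at hB
  have hAB : A / B = psiQuotient q / phiQuotient (-q) := by
    rw [hA, hB]
    field_simp
  have hBA : B / A = phiQuotient (-q) / psiQuotient q := by
    rw [← inv_div, hAB, inv_div]
  rw [hAB, hBA, hA, hB, one_div_div, one_div_div]
  exact ⟨by positivity, by positivity, h⟩

theorem sqrt_mul_mul_sqrt_div {A B : ℝ} (hA : 0 ≤ A) (hB : 0 < B) : √(A * B) * √(A / B) = A := by
  rw [← Real.sqrt_mul (by positivity), show A * B * (A / B) = A ^ 2 by field_simp, Real.sqrt_sq hA]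

theorem sqrt_mul_div_sqrt_div {A B : ℝ} (hA : 0 < A) (hB : 0 ≤ B) : √(A * B) / √(A / B) = B := by
  rw [Real.sqrt_mul hA.le, Real.sqrt_div hA.le, div_div_eq_mul_div, mul_assoc,
    Real.mul_self_sqrt hB, mul_div_cancel_left₀ _ (Real.sqrt_ne_zero'.2 hA)]

theorem exp_neg_pi_mul_sqrt_sq (s : ℝ) :
    Real.exp (-(π * √(s / 5))) ^ 2 = Real.exp (-(π * √(4 * s / 5))) := by
  rw [← Real.exp_nat_mul, show 4 * s / 5 = 2 ^ 2 * (s / 5) by ring,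
    Real.sqrt_mul (by positivity), Real.sqrt_sq (by norm_num)]
  push_cast
  ring_nf

theorem stmt_10 (s X Y : ℝ) (hs : 0 < s)
    (hX : X = Real.sqrt (b s 5 * b (4 * s) 5))
    (hY : Y = Real.sqrt (b s 5 / b (4 * s) 5)) :
    (Y ^ 4 + 1 / Y ^ 4) - 3 * (Y ^ 2 + 1 / Y ^ 2)
      - 5 * (X + 1 / X) * (Y + 1 / Y) - 12 = 0 := by
  have hnome : Real.exp (-(π * √(s / 5))) < 1 :=
    Real.exp_lt_one_iff.2 (neg_neg_of_pos (by positivity))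
  obtain ⟨hA, hB, h⟩ := thetaProduct_quotients_modular_equation (Real.exp_pos _) hnome
    (b_five_eq s rfl) (b_five_eq (4 * s) (exp_neg_pi_mul_sqrt_sq s))
  have hXY : X * Y = b s 5 := hX ▸ hY ▸ sqrt_mul_mul_sqrt_div hA.le hB
  have hXdivY : X / Y = b (4 * s) 5 := hX ▸ hY ▸ sqrt_mul_div_sqrt_div hA hB.le
  have hX0 : 0 < X := hX ▸ Real.sqrt_pos.2 (mul_pos hA hB)
  have hY0 : 0 < Y := hY ▸ Real.sqrt_pos.2 (div_pos hA hB)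
  rw [← hXY, ← hXdivY] at h
  rw [← h]
  field_simp
  ring
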